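/- Maximum principle for the transport equation (Lemma 3.1 of the paper, classical form): Let Ω ⊆ ℝ³ be a bounded open set, T > 0, and 0 < α ≤ β. Let u : ℝ³ × ℝ → ℝ³ be continuous and Lipschitz in its first variable uniformly in the second, i.e. there is K ≥ 0 such that ‖u(x,t) − u(y,t)‖ ≤ K‖x − y‖ for all x, y ∈ ℝ³ and all t ∈ [0,T], and suppose u(x,t) = 0 for every x in the frontier of Ω and every t ∈ [0,T]. Let ρ : ℝ³ × ℝ → ℝ be continuously differentiable and satisfy the transport equation ∂ₜρ(x,t) + u(x,t) · ∇ₓρ(x,t) = 0 for every x ∈ Ω and t ∈ [0,T]. If α ≤ ρ(x,0) ≤ β for every x ∈ Ω, then α ≤ ρ(x,t) ≤ β for every x ∈ Ω and every t ∈ [0,T]. -/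

import Mathlib

open Set
open scoped RealInnerProductSpace

/-!
Compare `ρ` with `ρ - ε t` on the compact cylinder `closure Ω × [0, T]`. Stepping backwards in
time along the velocity field does not leave the cylinder: interior points have room to move, and
boundary points do not move because `u = 0` there. At a maximum of `ρ - ε t` at a positive time,
the derivative in the direction `(u, 1)` would thus be nonnegative, whereas the transport equation
makes it `-ε`. So the maximum is attained at time `0`; let `ε → 0`, then apply the bound to `-ρ`.
-/

open Filter Topology

section NormedSpace

variable {E : Type*} [NormedAddCommGroup E] [NormedSpace ℝ E]

/-- The material derivative `∂ₜρ + u · ∇ₓρ` of `ρ` along the velocity field `u`. Encoded as the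
derivative of `ρ` in the space-time direction `(u, 1)`, it makes sense without an inner product;
it is `0` where `ρ` is not differentiable. -/
noncomputable def materialDeriv (u : E × ℝ → E) (ρ : E × ℝ → ℝ) (p : E × ℝ) : ℝ :=
  fderiv ℝ ρ p (u p, 1)

theorem materialDeriv_neg (u : E × ℝ → E) (ρ : E × ℝ → ℝ) (p : E × ℝ) :
    materialDeriv u (-ρ) p = -materialDeriv u ρ p := by
  simp [materialDeriv, fderiv_neg]

theorem materialDeriv_sub_const_mul_time {u : E × ℝ → E} {ρ : E × ℝ → ℝ} {p : E × ℝ}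
    (hρ : DifferentiableAt ℝ ρ p) (ε : ℝ) :
    materialDeriv u (fun q => ρ q - ε * q.2) p = materialDeriv u ρ p - ε := by
  have hderiv : HasFDerivAt (fun q : E × ℝ => ρ q - ε * q.2)
      (fderiv ℝ ρ p - ε • ContinuousLinearMap.snd ℝ E ℝ) p :=
    hρ.hasFDerivAt.sub (hasFDerivAt_snd.const_mul ε)
  simp [materialDeriv, hderiv.fderiv]

theorem materialDeriv_nonneg_of_isMaxOn {A : Set E} {T : ℝ} {u : E × ℝ → E} {f : E × ℝ → ℝ}
    {x : E} {t : ℝ} (ht : t ∈ Ioc 0 T) (hback : ∀ᶠ h in 𝓝[>] (0 : ℝ), x - h • u (x, t) ∈ A)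
    (hf : DifferentiableAt ℝ f (x, t)) (hmax : IsMaxOn f (A ×ˢ Icc 0 T) (x, t)) :
    0 ≤ materialDeriv u f (x, t) := by
  have hstep : ∀ᶠ h in 𝓝[>] (0 : ℝ), (x, t) + h • -(u (x, t), (1 : ℝ)) ∈ A ×ˢ Icc 0 T := by
    filter_upwards [hback, Ioo_mem_nhdsGT ht.1] with h hA hh
    refine ⟨by simpa [sub_eq_add_neg] using hA, ?_, ?_⟩ <;>
      simp only [Prod.snd_add, Prod.smul_snd, Prod.snd_neg, smul_eq_mul] <;>
      linarith [hh.1, hh.2, ht.2]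
  have hle := hmax.localize.hasFDerivWithinAt_nonpos hf.hasFDerivAt.hasFDerivWithinAt
    (mem_posTangentConeAt_of_frequently_mem hstep.frequently)
  rwa [map_neg, neg_nonpos] at hle

section Cylinder

variable {A : Set E} {T c : ℝ} {u : E × ℝ → E} {f : E × ℝ → ℝ}

theorem le_of_materialDeriv_neg (hA : IsCompact A)
    (hback : ∀ x ∈ A, ∀ t ∈ Ioc 0 T, ∀ᶠ h in 𝓝[>] (0 : ℝ), x - h • u (x, t) ∈ A)
    (hcont : ContinuousOn f (A ×ˢ Icc 0 T))
    (hdiff : ∀ x ∈ A, ∀ t ∈ Ioc 0 T, DifferentiableAt ℝ f (x, t))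
    (hneg : ∀ x ∈ A, ∀ t ∈ Ioc 0 T, materialDeriv u f (x, t) < 0)
    (hinit : ∀ x ∈ A, f (x, 0) ≤ c) {x : E} (hx : x ∈ A) {t : ℝ} (ht : t ∈ Icc 0 T) :
    f (x, t) ≤ c := by
  obtain ⟨⟨y, s⟩, ⟨hy, hs⟩, hmax⟩ :=
    (hA.prod isCompact_Icc).exists_isMaxOn ⟨(x, t), hx, ht⟩ hcont
  rcases hs.1.eq_or_lt with rfl | hs_pos
  · exact (hmax ⟨hx, ht⟩).trans (hinit y hy)
  · have hs' : s ∈ Ioc 0 T := ⟨hs_pos, hs.2⟩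
    exact absurd (materialDeriv_nonneg_of_isMaxOn hs' (hback y hy s hs') (hdiff y hy s hs') hmax)
      (hneg y hy s hs').not_ge

theorem le_of_materialDeriv_nonpos (hA : IsCompact A)
    (hback : ∀ x ∈ A, ∀ t ∈ Ioc 0 T, ∀ᶠ h in 𝓝[>] (0 : ℝ), x - h • u (x, t) ∈ A)
    (hcont : ContinuousOn f (A ×ˢ Icc 0 T))
    (hdiff : ∀ x ∈ A, ∀ t ∈ Ioc 0 T, DifferentiableAt ℝ f (x, t))
    (hnonpos : ∀ x ∈ A, ∀ t ∈ Ioc 0 T, materialDeriv u f (x, t) ≤ 0)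
    (hinit : ∀ x ∈ A, f (x, 0) ≤ c) {x : E} (hx : x ∈ A) {t : ℝ} (ht : t ∈ Icc 0 T) :
    f (x, t) ≤ c := by
  have hperturbed : ∀ ε > 0, f (x, t) - ε * t ≤ c := fun ε hε =>
    le_of_materialDeriv_neg (f := fun q => f q - ε * q.2) hA hback (by fun_prop)
      (fun y hy s hs => (hdiff y hy s hs).sub (by fun_prop))
      (fun y hy s hs => by
        rw [materialDeriv_sub_const_mul_time (hdiff y hy s hs)]
        linarith [hnonpos y hy s hs])
      (fun y hy => by simpa using hinit y hy) hx ht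
  have hlim : Tendsto (fun ε : ℝ => f (x, t) - ε * t) (𝓝[>] 0) (𝓝 (f (x, t))) :=
    (Continuous.tendsto' (by fun_prop) 0 _ (by simp)).mono_left nhdsWithin_le_nhds
  exact le_of_tendsto hlim (eventually_mem_nhdsWithin.mono hperturbed)

end Cylinder

section Domain

variable {Ω : Set E} {u : E × ℝ → E} {ρ : E × ℝ → ℝ}

theorem eventually_sub_smul_mem_closure (hΩ : IsOpen Ω) {x v : E} (hx : x ∈ closure Ω)
    (hv : x ∈ frontier Ω → v = 0) : ∀ᶠ h in 𝓝[>] (0 : ℝ), x - h • v ∈ closure Ω := by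
  by_cases hxΩ : x ∈ Ω
  · have hlim : Tendsto (fun h : ℝ => x - h • v) (𝓝[>] 0) (𝓝 x) :=
      (Continuous.tendsto' (by fun_prop) 0 x (by simp)).mono_left nhdsWithin_le_nhds
    exact (hlim.eventually (hΩ.mem_nhds hxΩ)).mono fun _ hh => subset_closure hh
  · have hv0 : v = 0 := hv (hΩ.frontier_eq ▸ ⟨hx, hxΩ⟩)
    simp [hv0, hx]

theorem materialDeriv_nonpos_of_mem_closure {t : ℝ}
    (hu : ContinuousOn (fun x => u (x, t)) (closure Ω)) (hρ : ContDiff ℝ 1 ρ)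
    (hnonpos : ∀ x ∈ Ω, materialDeriv u ρ (x, t) ≤ 0) {x : E} (hx : x ∈ closure Ω) :
    materialDeriv u ρ (x, t) ≤ 0 := by
  have hfderiv : Continuous (fderiv ℝ ρ) := hρ.continuous_fderiv one_ne_zero
  have hcont : ContinuousOn (fun y => materialDeriv u ρ (y, t)) (closure Ω) := by
    unfold materialDeriv
    exact (hfderiv.comp (by fun_prop)).continuousOn.clm_apply (hu.prodMk continuousOn_const)
  exact le_on_closure hnonpos hcont continuousOn_const hx

theorem le_of_materialDeriv_nonpos_of_eq_zero_on_frontier (hΩ : IsOpen Ω)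
    (hΩc : IsCompact (closure Ω)) {T c : ℝ}
    (hu : ∀ t ∈ Icc 0 T, ContinuousOn (fun x => u (x, t)) (closure Ω))
    (hu_bdry : ∀ x ∈ frontier Ω, ∀ t ∈ Icc 0 T, u (x, t) = 0) (hρ : ContDiff ℝ 1 ρ)
    (hnonpos : ∀ x ∈ Ω, ∀ t ∈ Icc 0 T, materialDeriv u ρ (x, t) ≤ 0)
    (hinit : ∀ x ∈ Ω, ρ (x, 0) ≤ c) {x : E} (hx : x ∈ Ω) {t : ℝ} (ht : t ∈ Icc 0 T) :
    ρ (x, t) ≤ c := by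
  have hinit_closure : ∀ y ∈ closure Ω, ρ (y, 0) ≤ c := fun y hy =>
    le_on_closure hinit (hρ.continuous.comp (by fun_prop)).continuousOn continuousOn_const hy
  exact le_of_materialDeriv_nonpos hΩc
    (fun y hy s hs => eventually_sub_smul_mem_closure hΩ hy
      fun hyf => hu_bdry y hyf s (Ioc_subset_Icc_self hs))
    hρ.continuous.continuousOn (fun y _ s _ => hρ.differentiable one_ne_zero (y, s))
    (fun y hy s hs => materialDeriv_nonpos_of_mem_closure (hu s (Ioc_subset_Icc_self hs)) hρ
      (fun z hz => hnonpos z hz s (Ioc_subset_Icc_self hs)) hy)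
    hinit_closure (subset_closure hx) ht

end Domain

end NormedSpace

section InnerProductSpace

variable {E : Type*} [NormedAddCommGroup E] [InnerProductSpace ℝ E]

theorem materialDeriv_eq_deriv_add_inner_gradient [CompleteSpace E] (u : E × ℝ → E)
    {ρ : E × ℝ → ℝ} {x : E} {t : ℝ} (hρ : DifferentiableAt ℝ ρ (x, t)) :
    materialDeriv u ρ (x, t) =
      deriv (fun s => ρ (x, s)) t + ⟪u (x, t), gradient (fun y => ρ (y, t)) x⟫ := by
  have htime : HasDerivAt (fun s => ρ (x, s)) (fderiv ℝ ρ (x, t) (0, 1)) t :=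
    hρ.hasFDerivAt.comp_hasDerivAt t ((hasDerivAt_const t x).prodMk (hasDerivAt_id t))
  have hspace : HasFDerivAt (fun y => ρ (y, t))
      ((fderiv ℝ ρ (x, t)).comp (ContinuousLinearMap.inl ℝ E ℝ)) x :=
    hρ.hasFDerivAt.comp x (hasFDerivAt_prodMk_left x t)
  rw [htime.deriv, real_inner_comm, gradient, InnerProductSpace.toDual_symm_apply, hspace.fderiv,
    ContinuousLinearMap.comp_apply, ContinuousLinearMap.inl_apply, ← map_add, materialDeriv]
  simp

theorem transport_maximum_principle_general [FiniteDimensional ℝ E] {Ω : Set E}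
    (hΩ : IsOpen Ω) (hΩb : Bornology.IsBounded Ω) {T α β : ℝ} {u : E × ℝ → E}
    (hu : ∀ t ∈ Icc 0 T, ContinuousOn (fun x => u (x, t)) (closure Ω))
    (hu_bdry : ∀ x ∈ frontier Ω, ∀ t ∈ Icc 0 T, u (x, t) = 0)
    {ρ : E × ℝ → ℝ} (hρ : ContDiff ℝ 1 ρ)
    (htransport : ∀ x ∈ Ω, ∀ t ∈ Icc 0 T,
      deriv (fun s => ρ (x, s)) t + ⟪u (x, t), gradient (fun y => ρ (y, t)) x⟫ = 0)
    (hinit : ∀ x ∈ Ω, ρ (x, 0) ∈ Icc α β) :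
    ∀ x ∈ Ω, ∀ t ∈ Icc 0 T, ρ (x, t) ∈ Icc α β := by
  intro x hx t ht
  have hmaterial : ∀ y ∈ Ω, ∀ s ∈ Icc 0 T, materialDeriv u ρ (y, s) = 0 := fun y hy s hs =>
    (materialDeriv_eq_deriv_add_inner_gradient u (hρ.differentiable one_ne_zero (y, s))).trans
      (htransport y hy s hs)
  have hΩc : IsCompact (closure Ω) := hΩb.isCompact_closure
  have hlower : (-ρ) (x, t) ≤ -α :=
    le_of_materialDeriv_nonpos_of_eq_zero_on_frontier (ρ := -ρ) hΩ hΩc hu hu_bdry hρ.neg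
      (fun y hy s hs => by rw [materialDeriv_neg, hmaterial y hy s hs, neg_zero])
      (fun y hy => neg_le_neg (hinit y hy).1) hx ht
  have hupper : ρ (x, t) ≤ β :=
    le_of_materialDeriv_nonpos_of_eq_zero_on_frontier hΩ hΩc hu hu_bdry hρ
      (fun y hy s hs => (hmaterial y hy s hs).le) (fun y hy => (hinit y hy).2) hx ht
  exact ⟨neg_le_neg_iff.mp hlower, hupper⟩

end InnerProductSpace

/-- **Maximum principle for the transport equation** (Lemma 3.1, classical form).
If `u` is continuous, Lipschitz in space uniformly in time, and vanishes on the boundary of a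
bounded open set `Ω ⊆ ℝ³`, and a `C¹` density `ρ` satisfies the transport equation
`∂ₜρ + u · ∇ₓρ = 0` on `Ω × [0,T]` with `α ≤ ρ(·,0) ≤ β` on `Ω`, then `α ≤ ρ ≤ β` on
`Ω × [0,T]`. -/
theorem transport_maximum_principle
    (Ω : Set (EuclideanSpace ℝ (Fin 3))) (hΩopen : IsOpen Ω)
    (hΩbdd : Bornology.IsBounded Ω)
    (T : ℝ) (hT : 0 < T) (α β : ℝ) (hα : 0 < α) (hαβ : α ≤ β)
    (u : EuclideanSpace ℝ (Fin 3) × ℝ → EuclideanSpace ℝ (Fin 3))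
    (hu_cont : Continuous u)
    (K : ℝ) (hK : 0 ≤ K)
    (hu_lip : ∀ t ∈ Icc (0 : ℝ) T, ∀ x y : EuclideanSpace ℝ (Fin 3),
      ‖u (x, t) - u (y, t)‖ ≤ K * ‖x - y‖)
    (hu_bdry : ∀ x ∈ frontier Ω, ∀ t ∈ Icc (0 : ℝ) T, u (x, t) = 0)
    (ρ : EuclideanSpace ℝ (Fin 3) × ℝ → ℝ)
    (hρ : ContDiff ℝ 1 ρ)
    (htransport : ∀ x ∈ Ω, ∀ t ∈ Icc (0 : ℝ) T,
      deriv (fun s : ℝ => ρ (x, s)) t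
        + ⟪u (x, t), gradient (fun y => ρ (y, t)) x⟫ = 0)
    (hinit : ∀ x ∈ Ω, ρ (x, 0) ∈ Icc α β) :
    ∀ x ∈ Ω, ∀ t ∈ Icc (0 : ℝ) T, ρ (x, t) ∈ Icc α β :=
  transport_maximum_principle_general hΩopen hΩbdd
    (fun _ _ => (hu_cont.comp (by fun_prop)).continuousOn) hu_bdry hρ htransport hinit
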